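/- Let $(X, Y)$ be a zero-mean jointly Gaussian pair with $\mathbb{E}[X^2] = \mathbb{E}[Y^2] = 1$ and $\mathbb{E}[XY] = \rho$ for $\rho \in [-1, 1]$. Then $\mathbb{E}[\max(X,0) \cdot \max(Y,0)] = \frac{\sqrt{1-\rho^2} + (\pi - \cos^{-1}(\rho))\rho}{2\pi}$. -/

import Mathlib

/-!
Write `ρ = cos θ` with `θ = arccos ρ ∈ [0, π]`. If `U, V` are independent standard Gaussians, then
`(U, cos θ * U + sin θ * V)` has the same one-dimensional projections as `(X, Y)`, hence the same
law by the Cramér–Wold device (`map_prod_eq_of_projections`, through characteristic functions).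
In polar coordinates `U = r cos φ`, the second coordinate is `r cos (φ - θ)`, so the expectation
splits into the radial integral `∫₀^∞ r³ exp (-r²/2) dr = 2` and the angular integral
`∫ max (cos φ) 0 * max (cos (φ - θ)) 0 dφ`. The integrand of the latter is supported on
`(θ - π/2, π/2]`, where both cosines are nonnegative, and the fundamental theorem of calculus gives
`((π - θ) cos θ + sin θ) / 2`.
-/

open MeasureTheory ProbabilityTheory Real

/-- Cramér–Wold device in the plane: a finite measure is determined by its images under the linear
forms `(x, y) ↦ a * x + b * y`. -/
lemma map_prod_eq_of_projections {μ ν : Measure (ℝ × ℝ)} [IsFiniteMeasure μ] [IsFiniteMeasure ν]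
    (h : ∀ a b : ℝ, μ.map (fun p => a * p.1 + b * p.2) = ν.map (fun p => a * p.1 + b * p.2)) :
    μ = ν := by
  refine Measure.ext_of_charFunDual (funext fun L => ?_)
  have hL : (L : ℝ × ℝ → ℝ) = fun p => L (1, 0) * p.1 + L (0, 1) * p.2 := by
    funext p
    have hp : p = p.1 • ((1, 0) : ℝ × ℝ) + p.2 • ((0, 1) : ℝ × ℝ) := by ext <;> simp
    conv_lhs => rw [hp, map_add, map_smul, map_smul]
    simp only [smul_eq_mul]
    ring
  rw [charFunDual_eq_charFun_map_one, charFunDual_eq_charFun_map_one, hL, h]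

lemma map_linear_stdGaussian_prod (c d : ℝ) :
    ((gaussianReal 0 1).prod (gaussianReal 0 1)).map (fun p : ℝ × ℝ => c * p.1 + d * p.2) =
      gaussianReal 0 (c ^ 2 + d ^ 2).toNNReal := by
  have h1 : HasLaw (fun p : ℝ × ℝ => c * p.1) (gaussianReal 0 (c ^ 2).toNNReal)
      ((gaussianReal 0 1).prod (gaussianReal 0 1)) := by
    refine ⟨by fun_prop, ?_⟩
    have : (fun p : ℝ × ℝ => c * p.1) = (c * ·) ∘ Prod.fst := rfl
    rw [this, ← Measure.map_map (by fun_prop) (by fun_prop), Measure.map_fst_prod]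
    simp [gaussianReal_map_const_mul]
    congr 1; ext; simp [sq_nonneg]
  have h2 : HasLaw (fun p : ℝ × ℝ => d * p.2) (gaussianReal 0 (d ^ 2).toNNReal)
      ((gaussianReal 0 1).prod (gaussianReal 0 1)) := by
    refine ⟨by fun_prop, ?_⟩
    have : (fun p : ℝ × ℝ => d * p.2) = (d * ·) ∘ Prod.snd := rfl
    rw [this, ← Measure.map_map (by fun_prop) (by fun_prop), Measure.map_snd_prod]
    simp [gaussianReal_map_const_mul]
    congr 1; ext; simp [sq_nonneg]
  have hi : IndepFun (fun p : ℝ × ℝ => c * p.1) (fun p : ℝ × ℝ => d * p.2)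
      ((gaussianReal 0 1).prod (gaussianReal 0 1)) :=
    indepFun_prod (X := fun x : ℝ => c * x) (Y := fun x : ℝ => d * x) (by fun_prop) (by fun_prop)
  have := gaussianReal_add_gaussianReal_of_indepFun hi h1.map_eq h2.map_eq
  rw [Real.toNNReal_add (sq_nonneg _) (sq_nonneg _)]
  rw [add_zero] at this
  exact this

lemma radial_integral : ∫ r in Set.Ioi (0 : ℝ), r ^ 3 * rexp (-(r ^ 2) / 2) = 2 := by
  have h := integral_rpow_mul_exp_neg_mul_rpow (p := 2) (q := 3) (b := 1 / 2)
    (by norm_num) (by norm_num) (by norm_num)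
  have h2 : Real.Gamma 2 = 1 := by simp
  have e : (-(3 + 1) / 2 : ℝ) = -2 := by norm_num
  have e' : ((3 + 1) / 2 : ℝ) = 2 := by norm_num
  rw [e, e', h2, Real.rpow_neg (by norm_num)] at h
  norm_num at h
  refine (setIntegral_congr_fun measurableSet_Ioi fun r _ => ?_).trans h
  congr 2
  ring

lemma angular_integral {θ : ℝ} (h0 : 0 ≤ θ) (hπ : θ ≤ π) :
    ∫ φ in Set.Ioo (-π) π, max (cos φ) 0 * max (cos (φ - θ)) 0 =
      ((π - θ) * cos θ + sin θ) / 2 := by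
  have hpos := Real.pi_pos
  have key : ∀ φ ∈ Set.Ioo (-π) π, max (cos φ) 0 * max (cos (φ - θ)) 0 =
      (Set.Ioc (θ - π / 2) (π / 2)).indicator (fun φ => cos φ * cos (φ - θ)) φ := by
    rintro φ ⟨hφ1, hφ2⟩
    by_cases hm : φ ∈ Set.Ioc (θ - π / 2) (π / 2)
    · rw [Set.indicator_of_mem hm, max_eq_left, max_eq_left]
      · exact cos_nonneg_of_mem_Icc ⟨by linarith [hm.1], by linarith [hm.2]⟩
      · exact cos_nonneg_of_mem_Icc ⟨by linarith [hm.1], by linarith [hm.2]⟩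
    · rw [Set.indicator_of_notMem hm]
      rcases le_or_gt φ (π / 2) with h | h
      · have h' : φ ≤ θ - π / 2 := by
          by_contra hc
          exact hm ⟨not_le.mp hc, h⟩
        rcases le_or_gt φ (-(π / 2)) with h3 | h3
        · have : cos φ ≤ 0 := by
            rw [← cos_neg]
            exact cos_nonpos_of_pi_div_two_le_of_le (by linarith) (by linarith)
          rw [max_eq_right this, zero_mul]
        · have : cos (φ - θ) ≤ 0 := by
            rw [← cos_neg]
            exact cos_nonpos_of_pi_div_two_le_of_le (by linarith) (by linarith)
          rw [max_eq_right this, mul_zero]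
      · rw [max_eq_right (cos_nonpos_of_pi_div_two_le_of_le h.le (by linarith)), zero_mul]
  have hsub : Set.Ioc (θ - π / 2) (π / 2) ⊆ Set.Ioo (-π) π := fun φ hφ =>
    ⟨by linarith [hφ.1], by linarith [hφ.2]⟩
  rw [setIntegral_congr_fun measurableSet_Ioo key, setIntegral_indicator measurableSet_Ioc,
    Set.inter_eq_right.mpr hsub,
    ← intervalIntegral.integral_of_le (by linarith)]
  have hd : ∀ φ ∈ Set.uIcc (θ - π / 2) (π / 2),
      HasDerivAt (fun φ => φ * cos θ / 2 + sin (2 * φ - θ) / 4) (cos φ * cos (φ - θ)) φ := by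
    intro φ _
    have h1 : HasDerivAt (fun φ : ℝ => 2 * φ - θ) (2 * 1) φ :=
      ((hasDerivAt_id φ).const_mul 2).sub_const θ
    have h2 := (((hasDerivAt_id φ).mul_const (cos θ)).div_const 2).add (h1.sin.div_const 4)
    refine h2.congr_deriv ?_
    have e1 : cos (2 * φ - θ) = cos φ * cos (φ - θ) - sin φ * sin (φ - θ) := by
      rw [← cos_add]; congr 1; ring
    have e2 : cos θ = cos φ * cos (φ - θ) + sin φ * sin (φ - θ) := by
      rw [← cos_sub]; congr 1; ring
    rw [e1, e2]
    ring
  rw [intervalIntegral.integral_eq_sub_of_hasDerivAt hd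
    (Continuous.intervalIntegrable (by fun_prop) _ _)]
  have e1 : sin (2 * (π / 2) - θ) = sin θ := by
    rw [← sin_pi_sub]; congr 1; ring
  have e2 : sin (2 * (θ - π / 2) - θ) = - sin θ := by
    rw [← sin_sub_pi]; congr 1; ring
  rw [e1, e2]
  ring

lemma integral_relu_stdGaussian_prod {θ : ℝ} (h0 : 0 ≤ θ) (hπ : θ ≤ π) :
    ∫ p, max p.1 0 * max (cos θ * p.1 + sin θ * p.2) 0
        ∂((gaussianReal 0 1).prod (gaussianReal 0 1)) =
      ((π - θ) * cos θ + sin θ) / (2 * π) := by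
  have hpos := Real.pi_pos
  rw [gaussianReal_of_var_ne_zero 0 one_ne_zero,
    prod_withDensity (by fun_prop) (by fun_prop),
    integral_withDensity_eq_integral_toReal_smul (by fun_prop)
      (ae_of_all _ fun p => ENNReal.mul_lt_top gaussianPDF_lt_top gaussianPDF_lt_top),
    ← Measure.volume_eq_prod, ← integral_comp_polarCoord_symm]
  have key : ∀ p ∈ polarCoord.target,
      p.1 • ((gaussianPDF 0 1 (polarCoord.symm p).1 * gaussianPDF 0 1 (polarCoord.symm p).2).toReal •
        (max (polarCoord.symm p).1 0 *
          max (cos θ * (polarCoord.symm p).1 + sin θ * (polarCoord.symm p).2) 0)) =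
      ((2 * π)⁻¹ * (p.1 ^ 3 * rexp (-(p.1 ^ 2) / 2))) *
        (max (cos p.2) 0 * max (cos (p.2 - θ)) 0) := by
    rintro ⟨r, φ⟩ ⟨hr, -⟩
    have hr : 0 < r := hr
    have m1 : max (r * cos φ) 0 = r * max (cos φ) 0 := by
      rw [mul_max_of_nonneg _ _ hr.le, mul_zero]
    have m2 : max (cos θ * (r * cos φ) + sin θ * (r * sin φ)) 0 = r * max (cos (φ - θ)) 0 := by
      rw [mul_max_of_nonneg _ _ hr.le, mul_zero, cos_sub]
      congr 1; ring
    have hs : (2 * π)⁻¹ = (√(2 * π))⁻¹ * (√(2 * π))⁻¹ := by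
      rw [← mul_inv, Real.mul_self_sqrt (by positivity)]
    have hexp : rexp (-(r * cos φ) ^ 2 / 2) * rexp (-(r * sin φ) ^ 2 / 2) =
        rexp (-(r ^ 2) / 2) := by
      rw [← Real.exp_add]
      congr 1
      linear_combination (-(r ^ 2) / 2) * sin_sq_add_cos_sq φ
    simp only [polarCoord_symm_apply, ENNReal.toReal_mul, toReal_gaussianPDF, gaussianPDFReal,
      smul_eq_mul, m1, m2, sub_zero, NNReal.coe_one, mul_one]
    rw [← hexp, hs]
    ring
  rw [setIntegral_congr_fun polarCoord.open_target.measurableSet key, polarCoord_target,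
    Measure.volume_eq_prod,
    setIntegral_prod_mul (fun r : ℝ => (2 * π)⁻¹ * (r ^ 3 * rexp (-(r ^ 2) / 2)))
      (fun φ : ℝ => max (cos φ) 0 * max (cos (φ - θ)) 0),
    integral_const_mul, radial_integral, angular_integral h0 hπ]
  field_simp

/-- For a zero-mean jointly Gaussian pair `(X, Y)` with unit variances and
correlation `ρ ∈ [-1, 1]` (joint Gaussianity encoded via Cramér–Wold: every
linear combination `a X + b Y` is a centered Gaussian with variance
`a² + 2 a b ρ + b²`), we have
`𝔼[ReLU(X) ReLU(Y)] = (√(1 - ρ²) + (π - arccos ρ) ρ) / (2π)`. -/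
theorem stmt_1 {Ω : Type*} [MeasureSpace Ω] [IsProbabilityMeasure (ℙ : Measure Ω)]
    (X Y : Ω → ℝ) (ρ : ℝ) (hρ : ρ ∈ Set.Icc (-1 : ℝ) 1)
    (hGauss : ∀ a b : ℝ,
      Measure.map (fun ω => a * X ω + b * Y ω) ℙ =
        gaussianReal 0 (a ^ 2 + 2 * a * b * ρ + b ^ 2).toNNReal) :
    ∫ ω, max (X ω) 0 * max (Y ω) 0 =
      (Real.sqrt (1 - ρ ^ 2) + (π - Real.arccos ρ) * ρ) / (2 * π) := by
  -- The image of a measure under a non-a.e.-measurable map is `0`, which is not a Gaussian law.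
  have hmeas : ∀ a b : ℝ, AEMeasurable (fun ω => a * X ω + b * Y ω) ℙ := fun a b =>
    AEMeasurable.of_map_ne_zero (by rw [hGauss]; exact IsProbabilityMeasure.ne_zero _)
  have hX : AEMeasurable X ℙ := by simpa using hmeas 1 0
  have hY : AEMeasurable Y ℙ := by simpa using hmeas 0 1
  have hcos : cos (arccos ρ) = ρ := cos_arccos hρ.1 hρ.2
  have hsin : sin (arccos ρ) = √(1 - ρ ^ 2) := sin_arccos ρ
  set θ := arccos ρ
  have hlaw : (ℙ : Measure Ω).map (fun ω => (X ω, Y ω)) =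
      ((gaussianReal 0 1).prod (gaussianReal 0 1)).map
        (fun p : ℝ × ℝ => (p.1, cos θ * p.1 + sin θ * p.2)) := by
    have : IsProbabilityMeasure ((ℙ : Measure Ω).map (fun ω => (X ω, Y ω))) :=
      Measure.isProbabilityMeasure_map (hX.prodMk hY)
    refine map_prod_eq_of_projections fun a b => ?_
    rw [AEMeasurable.map_map_of_aemeasurable (by fun_prop) (hX.prodMk hY),
      Measure.map_map (by fun_prop) (by fun_prop)]
    have e : (fun p : ℝ × ℝ => a * p.1 + b * p.2) ∘
        (fun p : ℝ × ℝ => (p.1, cos θ * p.1 + sin θ * p.2)) =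
        fun p => (a + b * cos θ) * p.1 + (b * sin θ) * p.2 := by
      funext p; simp only [Function.comp]; ring
    rw [e, map_linear_stdGaussian_prod]
    refine (hGauss a b).trans ?_
    congr 2
    rw [← hcos]
    linear_combination (-b ^ 2) * sin_sq_add_cos_sq θ
  have hint := integral_relu_stdGaussian_prod (arccos_nonneg ρ) (arccos_le_pi ρ)
  calc ∫ ω, max (X ω) 0 * max (Y ω) 0
      = ∫ p, max p.1 0 * max p.2 0 ∂((ℙ : Measure Ω).map (fun ω => (X ω, Y ω))) :=
        (integral_map (f := fun p : ℝ × ℝ => max p.1 0 * max p.2 0) (hX.prodMk hY)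
          (Continuous.aestronglyMeasurable (by fun_prop))).symm
    _ = ∫ p, max p.1 0 * max (cos θ * p.1 + sin θ * p.2) 0
        ∂((gaussianReal 0 1).prod (gaussianReal 0 1)) := by
        rw [hlaw, integral_map (by fun_prop) (Continuous.aestronglyMeasurable (by fun_prop))]
    _ = _ := by
        rw [hint, hcos, hsin, add_comm]
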